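/- Let N ≥ 1 and let C_N be the cyclic subgroup of the permutation group of Fin N generated by the N-cycle i ↦ i+1 (mod N). Then the real dimension of C_N su(2^N), the real vector space of 2^N × 2^N complex matrices a that are skew-Hermitian, traceless, and satisfy U_α a U_α⁻¹ = a for all α ∈ C_N, equals (1/N) · Σ_{d ∣ N} φ(d) · 4^{N/d} − 1, where φ is Euler's totient function and the sum runs over the positive divisors d of N. -/

import Mathlib

/-!
A skew-Hermitian matrix has antisymmetric real part and symmetric imaginary part, so it is
determined by the real matrix `re a + im a`, which is arbitrary. Conjugating by permutation matrices
permutes the entries, hence the invariant skew-Hermitian matrices correspond to the real functions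
on the orbits of pairs of indices. The trace is a nonzero functional on this space with purely
imaginary values, and its vanishing lowers the dimension by one.

By Burnside's lemma the number of orbits is the average over `g` of the number of fixed pairs of
bit strings, which is `4 ^ c` with `c` the number of cycles of `g`. In a cyclic group acting freely
on the `N` qubits, an element of order `d` has `N / d` cycles, and there are `φ d` such elements
for each divisor `d` of the group order.
-/

open Matrix

/-- The permutation matrix on the index set `I → Fin 2` associated to a permutation `α` of
`I`, corresponding to the bijection `x ↦ x ∘ α`: its `(x, y)` entry is `1` if `y = x ∘ α`
and `0` otherwise. -/
def qubitPermMatrix {I : Type*} [DecidableEq I] [Fintype I] (α : Equiv.Perm I) :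
    Matrix (I → Fin 2) (I → Fin 2) ℂ :=
  Matrix.of fun x y => if y = x ∘ α then 1 else 0

open Module MulAction

section InvariantSkewHermitian

variable {G X : Type*} [Group G] [MulAction G X]

/-- The skew-Hermitian matrix with real part `(f - fᵀ) / 2` and imaginary part `(f + fᵀ) / 2`,
where the real matrix `f` is encoded as a function on pairs of indices. -/
noncomputable def skewHermitianOfReal : (X × X → ℝ) →ₗ[ℝ] Matrix X X ℂ where
  toFun f := of fun x y => ⟨(f (x, y) - f (y, x)) / 2, (f (x, y) + f (y, x)) / 2⟩
  map_add' f g := by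
    ext x y
    apply Complex.ext <;>
      simp only [of_apply, Matrix.add_apply, Pi.add_apply, Complex.add_re, Complex.add_im] <;> ring
  map_smul' r f := by
    ext x y
    apply Complex.ext <;>
      simp only [of_apply, Matrix.smul_apply, Pi.smul_apply, RingHom.id_apply, smul_eq_mul,
        Complex.smul_re, Complex.smul_im] <;> ring

theorem skewHermitianOfReal_apply (f : X × X → ℝ) (x y : X) :
    skewHermitianOfReal f x y = ⟨(f (x, y) - f (y, x)) / 2, (f (x, y) + f (y, x)) / 2⟩ :=
  rfl

theorem re_add_im_skewHermitianOfReal (f : X × X → ℝ) (x y : X) :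
    (skewHermitianOfReal f x y).re + (skewHermitianOfReal f x y).im = f (x, y) := by
  rw [skewHermitianOfReal_apply]
  ring

theorem skewHermitianOfReal_injective :
    Function.Injective (skewHermitianOfReal : (X × X → ℝ) →ₗ[ℝ] Matrix X X ℂ) := by
  intro f g h
  ext ⟨x, y⟩
  rw [← re_add_im_skewHermitianOfReal f, h, re_add_im_skewHermitianOfReal]

theorem conjTranspose_skewHermitianOfReal (f : X × X → ℝ) :
    (skewHermitianOfReal f)ᴴ = -skewHermitianOfReal f := by
  ext x y
  apply Complex.ext <;>
    simp only [conjTranspose_apply, Matrix.neg_apply, skewHermitianOfReal_apply, Complex.star_def,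
      Complex.conj_re, Complex.conj_im, Complex.neg_re, Complex.neg_im] <;> ring

theorem skewHermitianOfReal_re_add_im {a : Matrix X X ℂ} (ha : aᴴ = -a) :
    skewHermitianOfReal (fun p => (a p.1 p.2).re + (a p.1 p.2).im) = a := by
  ext x y
  have hxy : star (a y x) = -a x y := congr_fun₂ ha x y
  have hre : (a y x).re = -(a x y).re := congrArg Complex.re hxy
  have him : -(a y x).im = -(a x y).im := congrArg Complex.im hxy
  apply Complex.ext <;> rw [skewHermitianOfReal_apply] <;> dsimp only <;> linarith

theorem re_trace_eq_zero_of_conjTranspose_eq_neg [Fintype X] {a : Matrix X X ℂ} (ha : aᴴ = -a) :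
    a.trace.re = 0 := by
  have h := congrArg (fun b => (trace b).re) ha
  simp only [trace_conjTranspose, trace_neg, Complex.neg_re, Complex.star_def, Complex.conj_re] at h
  linarith

variable (G X)

/-- The real vector space of skew-Hermitian matrices indexed by `X` that are invariant under the
simultaneous action of `G` on rows and columns. -/
def invariantSkewHermitian : Submodule ℝ (Matrix X X ℂ) where
  carrier := {a | aᴴ = -a ∧ ∀ (g : G) (x y : X), a (g • x) (g • y) = a x y}
  zero_mem' := by simp
  add_mem' := by
    rintro a b ⟨ha, ha'⟩ ⟨hb, hb'⟩
    exact ⟨by rw [conjTranspose_add, ha, hb, neg_add], by simp [ha', hb']⟩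
  smul_mem' := by
    rintro r a ⟨ha, ha'⟩
    exact ⟨by rw [conjTranspose_smul, ha, star_trivial, smul_neg], by simp [ha']⟩

theorem range_skewHermitianOfReal_comp_funLeft :
    LinearMap.range (skewHermitianOfReal ∘ₗ
      LinearMap.funLeft ℝ ℝ (Quotient.mk (orbitRel G (X × X)))) =
      invariantSkewHermitian G X := by
  ext a
  constructor
  · rintro ⟨c, rfl⟩
    refine ⟨conjTranspose_skewHermitianOfReal _, fun g x y => ?_⟩
    have hmk (x y : X) : Quotient.mk (orbitRel G (X × X)) (g • x, g • y) = ⟦(x, y)⟧ :=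
      Quotient.sound ⟨g, rfl⟩
    simp only [LinearMap.comp_apply, skewHermitianOfReal_apply, LinearMap.funLeft_apply, hmk]
  · rintro ⟨ha, ha'⟩
    refine ⟨Quotient.lift (fun p => (a p.1 p.2).re + (a p.1 p.2).im) ?_,
      skewHermitianOfReal_re_add_im ha⟩
    rintro _ p ⟨g, rfl⟩
    simp only [Prod.smul_fst, Prod.smul_snd, ha']

theorem finrank_invariantSkewHermitian [Finite X] :
    finrank ℝ (invariantSkewHermitian G X) = Nat.card (orbitRel.Quotient G (X × X)) := by
  have := Fintype.ofFinite (orbitRel.Quotient G (X × X))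
  rw [← range_skewHermitianOfReal_comp_funLeft, LinearMap.finrank_range_of_inj,
    finrank_fintype_fun_eq_card, Nat.card_eq_fintype_card]
  exact skewHermitianOfReal_injective.comp
    (LinearMap.funLeft_injective_of_surjective ℝ ℝ _ Quotient.mk_surjective)

variable [Fintype X]

/-- The traceless part of `invariantSkewHermitian G X`. For a group `G` of permutations of the
qubits `I`, the space `Gsu(2^N)` is `invariantSu Gᵈᵐᵃ (I → Fin 2)`, because `Gᵈᵐᵃ` acts on
`I → Fin 2` by `x ↦ x ∘ α`. -/
noncomputable def invariantSu : Submodule ℝ (Matrix X X ℂ) :=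
  invariantSkewHermitian G X ⊓ LinearMap.ker (traceLinearMap X ℝ ℂ)

theorem finrank_invariantSu_add_one [Nonempty X] :
    finrank ℝ (invariantSu G X) + 1 = Nat.card (orbitRel.Quotient G (X × X)) := by
  classical
  let U := invariantSkewHermitian G X
  let τ : Dual ℝ U := (Complex.imLm ∘ₗ traceLinearMap X ℝ ℂ).domRestrict U
  have hker : (LinearMap.ker τ).map U.subtype = invariantSu G X := by
    rw [LinearMap.ker_domRestrict, Submodule.map_comap_subtype]
    ext a
    refine and_congr_right fun ha => ?_
    simp [Complex.ext_iff, re_trace_eq_zero_of_conjTranspose_eq_neg ha.1]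
  have hone : (Complex.I • 1 : Matrix X X ℂ) ∈ U :=
    ⟨by simp, fun g x y => by simp [one_apply]⟩
  have hτ : τ ≠ 0 := by
    intro h
    have := congr($h ⟨_, hone⟩)
    simp [τ] at this
  rw [← hker, Submodule.finrank_map_subtype_eq, Dual.finrank_ker_add_one_of_ne_zero hτ,
    finrank_invariantSkewHermitian]

end InvariantSkewHermitian

section OrbitCount

theorem sum_apply_orderOf_of_isCyclic {G M : Type*} [Group G] [IsCyclic G] [Fintype G]
    [AddCommMonoid M] (f : ℕ → M) :
    ∑ g : G, f (orderOf g) = ∑ d ∈ (Nat.card G).divisors, d.totient • f d := by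
  classical
  rw [← Finset.sum_fiberwise_of_maps_to (g := orderOf) (t := (Nat.card G).divisors)
    fun g _ => Nat.mem_divisors.2 ⟨orderOf_dvd_natCard g, Nat.card_pos.ne'⟩]
  refine Finset.sum_congr rfl fun d hd => ?_
  rw [Finset.sum_congr rfl fun g hg => congrArg f (Finset.mem_filter.1 hg).2, Finset.sum_const,
    IsCyclic.card_orderOf_eq_totient]
  rw [← Nat.card_eq_fintype_card]
  exact Nat.dvd_of_mem_divisors hd

variable {G ι : Type*} (A B : Type*) [Group G] [MulAction G ι]

theorem card_fixedBy_domMulAct [Finite ι] (g : G) :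
    Nat.card (fixedBy (ι → A) (DomMulAct.mk g)) =
      Nat.card A ^ Nat.card (orbitRel.Quotient (Subgroup.zpowers g) ι) := by
  rw [← Nat.card_fun]
  refine Nat.card_congr <| (Equiv.subtypeEquivRight fun f => ?_).trans (Setoid.liftEquiv _)
  rw [← mem_fixedBy_zpowers_iff_mem_fixedBy]
  constructor
  · rintro hf _ i ⟨⟨_, k, rfl⟩, rfl⟩
    exact congr_fun (hf k) i
  · intro hf k
    ext i
    exact hf ⟨⟨g ^ k, k, rfl⟩, rfl⟩

variable (ι) in
theorem card_orbitRel_quotient_zpowers [IsCancelSMul G ι] [Finite G] (g : G) :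
    Nat.card (orbitRel.Quotient (Subgroup.zpowers g) ι) = Nat.card ι / orderOf g := by
  have hfree (i : ι) : stabilizer (Subgroup.zpowers g) i = ⊥ :=
    (Subgroup.eq_bot_iff_forall _).2 fun _ hi =>
      Subtype.ext (IsCancelSMul.eq_one_of_smul (G := G) hi)
  rw [Nat.card_congr (selfEquivOrbitsQuotientProd hfree), Nat.card_prod, Nat.card_zpowers,
    Nat.mul_div_cancel _ (orderOf_pos g)]

theorem fixedBy_prod {H α β : Type*} [Group H] [MulAction H α] [MulAction H β] (h : H) :
    fixedBy (α × β) h = fixedBy α h ×ˢ fixedBy β h := by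
  ext p
  simp [Prod.ext_iff]

variable (G ι) [Finite ι] [Finite A] [Finite B]

theorem card_orbitRel_quotient_arrow_prod_mul_card [Fintype G] :
    Nat.card (orbitRel.Quotient Gᵈᵐᵃ ((ι → A) × (ι → B))) * Nat.card G =
      ∑ g : G, (Nat.card A * Nat.card B) ^
        Nat.card (orbitRel.Quotient (Subgroup.zpowers g) ι) := by
  classical
  have : Fintype Gᵈᵐᵃ := Fintype.ofEquiv G DomMulAct.mk
  have := Fintype.ofFinite (ι → A)
  have := Fintype.ofFinite (ι → B)
  have := Fintype.ofFinite (orbitRel.Quotient Gᵈᵐᵃ ((ι → A) × (ι → B)))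
  have burnside := sum_card_fixedBy_eq_card_orbits_mul_card_group Gᵈᵐᵃ ((ι → A) × (ι → B))
  simp only [← Nat.card_eq_fintype_card, ← Nat.card_congr (DomMulAct.mk (M := G))] at burnside
  refine burnside.symm.trans ((Equiv.sum_comp DomMulAct.mk _).symm.trans ?_)
  refine Finset.sum_congr rfl fun g _ => ?_
  rw [fixedBy_prod, Nat.card_congr (Equiv.Set.prod _ _), Nat.card_prod, card_fixedBy_domMulAct,
    card_fixedBy_domMulAct, mul_pow]

theorem card_orbitRel_quotient_arrow_prod_mul_card_of_isCyclic [Finite G] [IsCyclic G]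
    [IsCancelSMul G ι] :
    Nat.card (orbitRel.Quotient Gᵈᵐᵃ ((ι → A) × (ι → B))) * Nat.card G =
      ∑ d ∈ (Nat.card G).divisors,
        d.totient * (Nat.card A * Nat.card B) ^ (Nat.card ι / d) := by
  have := Fintype.ofFinite G
  simp only [card_orbitRel_quotient_arrow_prod_mul_card, card_orbitRel_quotient_zpowers ι,
    sum_apply_orderOf_of_isCyclic fun d => (Nat.card A * Nat.card B) ^ (Nat.card ι / d),
    smul_eq_mul]

end OrbitCount

section QubitPermMatrix

theorem permMatrix_mul_mul_inv {n R : Type*} [Fintype n] [DecidableEq n] [CommRing R]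
    (σ : Equiv.Perm n) (a : Matrix n n R) :
    σ.permMatrix R * a * (σ.permMatrix R)⁻¹ = a.submatrix σ σ := by
  have hinv : (σ.permMatrix R)⁻¹ = (σ⁻¹).permMatrix R :=
    inv_eq_left_inv <| by rw [← permMatrix_mul, mul_inv_cancel, permMatrix_one]
  rw [hinv, PEquiv.toMatrix_toPEquiv_mul, PEquiv.mul_toMatrix_toPEquiv]
  rfl

variable {I : Type*} [Fintype I] [DecidableEq I]

theorem qubitPermMatrix_eq_permMatrix (α : Equiv.Perm I) :
    qubitPermMatrix α = (toPerm (DomMulAct.mk α) : Equiv.Perm (I → Fin 2)).permMatrix ℂ := by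
  ext x y
  have hx : toPerm (DomMulAct.mk α) x = x ∘ α := rfl
  simp [qubitPermMatrix, PEquiv.toMatrix_apply, hx, eq_comm]

theorem qubitPermMatrix_conj_eq_self_iff {α : Equiv.Perm I}
    {a : Matrix (I → Fin 2) (I → Fin 2) ℂ} :
    qubitPermMatrix α * a * (qubitPermMatrix α)⁻¹ = a ↔
      ∀ x y, a (x ∘ α) (y ∘ α) = a x y := by
  rw [qubitPermMatrix_eq_permMatrix, permMatrix_mul_mul_inv, ← Matrix.ext_iff]
  rfl

theorem mem_invariantSu_domMulAct {G : Subgroup (Equiv.Perm I)}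
    {a : Matrix (I → Fin 2) (I → Fin 2) ℂ} :
    a ∈ invariantSu Gᵈᵐᵃ (I → Fin 2) ↔ aᴴ = -a ∧ a.trace = 0 ∧
      ∀ α ∈ G, qubitPermMatrix α * a * (qubitPermMatrix α)⁻¹ = a := by
  simp only [qubitPermMatrix_conj_eq_self_iff]
  constructor
  · rintro ⟨⟨ha, hinv⟩, htr⟩
    exact ⟨ha, htr, fun α hα => hinv (DomMulAct.mk ⟨α, hα⟩)⟩
  · rintro ⟨ha, htr, hinv⟩
    exact ⟨⟨ha, fun g => hinv _ (DomMulAct.mk.symm g).2⟩, htr⟩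

end QubitPermMatrix

section FullCycle

variable {ι : Type*} {σ : Equiv.Perm ι}

theorem isCancelSMul_zpowers_of_isCycleOn_univ (hσ : σ.IsCycleOn Set.univ) :
    IsCancelSMul (Subgroup.zpowers σ) ι := by
  refine isCancelSMul_iff_eq_one_of_smul_eq.2 ?_
  rintro ⟨_, k, rfl⟩ i (hi : (σ ^ k) i = i)
  ext j
  obtain ⟨m, rfl⟩ := hσ.2 (Set.mem_univ i) (Set.mem_univ j)
  calc (σ ^ k) ((σ ^ m) i) = (σ ^ m) ((σ ^ k) i) :=
        Equiv.congr_fun (Commute.zpow_zpow_self σ k m).eq i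
    _ = (σ ^ m) i := by rw [hi]

theorem card_zpowers_of_isCycleOn_univ [Nonempty ι] (hσ : σ.IsCycleOn Set.univ) :
    Nat.card (Subgroup.zpowers σ) = Nat.card ι := by
  have := isCancelSMul_zpowers_of_isCycleOn_univ hσ
  obtain ⟨i⟩ := ‹Nonempty ι›
  refine Nat.card_congr <| .ofBijective (· • i) ⟨fun g h => IsCancelSMul.right_cancel g h i, ?_⟩
  intro j
  obtain ⟨k, hk⟩ := hσ.2 (Set.mem_univ i) (Set.mem_univ j)
  exact ⟨⟨σ ^ k, k, rfl⟩, hk⟩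

theorem isCycleOn_univ_finRotate (N : ℕ) : (finRotate N).IsCycleOn Set.univ := by
  rcases lt_or_ge N 2 with hN | hN
  · have := Fin.subsingleton_iff_le_one.2 (Nat.lt_succ_iff.1 hN)
    exact Equiv.Perm.isCycleOn_of_subsingleton _ _
  · have hsupp : {i | finRotate N i ≠ i} = Set.univ := by
      rw [← Equiv.Perm.coe_support_eq_set_support, support_finRotate_of_le hN, Finset.coe_univ]
    exact hsupp ▸ (isCycle_finRotate_of_le hN).isCycleOn

end FullCycle

theorem finrank_CNsu_general {I : Type*} [Fintype I] [DecidableEq I]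
    (G : Subgroup (Equiv.Perm I)) [IsCyclic G] [IsCancelSMul G I]
    (V : Submodule ℝ (Matrix (I → Fin 2) (I → Fin 2) ℂ))
    (hV : ∀ a, a ∈ V ↔ aᴴ = -a ∧ a.trace = 0 ∧
      ∀ α ∈ G, qubitPermMatrix α * a * (qubitPermMatrix α)⁻¹ = a) :
    (finrank ℝ V : ℚ) =
      (1 / Nat.card G) * ∑ d ∈ (Nat.card G).divisors,
        (Nat.totient d : ℚ) * 4 ^ (Fintype.card I / d) - 1 := by
  obtain rfl : V = invariantSu Gᵈᵐᵃ (I → Fin 2) := by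
    ext a
    rw [hV, mem_invariantSu_domMulAct]
  have hcount : (finrank ℝ (invariantSu Gᵈᵐᵃ (I → Fin 2)) + 1) * Nat.card G =
      ∑ d ∈ (Nat.card G).divisors, d.totient * 4 ^ (Fintype.card I / d) := by
    simpa [finrank_invariantSu_add_one] using
      card_orbitRel_quotient_arrow_prod_mul_card_of_isCyclic G I (Fin 2) (Fin 2)
  have hcard : (Nat.card G : ℚ) ≠ 0 := Nat.cast_ne_zero.2 Nat.card_pos.ne'
  rw [one_div, eq_sub_iff_add_eq, eq_inv_mul_iff_mul_eq₀ hcard, mul_comm]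
  exact_mod_cast hcount

/-- For `N ≥ 1`, let `C_N` be the cyclic subgroup of `Equiv.Perm (Fin N)`
generated by the `N`-cycle `i ↦ i + 1 (mod N)` (i.e. `finRotate N`).  The real dimension of
`C_N su(2^N)` equals `(1/N) · Σ_{d ∣ N} φ(d) · 4^{N/d} − 1`. -/
theorem finrank_CNsu (N : ℕ) (hN : 1 ≤ N)
    (V : Submodule ℝ (Matrix (Fin N → Fin 2) (Fin N → Fin 2) ℂ))
    (hV : ∀ a, a ∈ V ↔ aᴴ = -a ∧ a.trace = 0 ∧
      ∀ α ∈ Subgroup.zpowers (finRotate N),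
        qubitPermMatrix α * a * (qubitPermMatrix α)⁻¹ = a) :
    (Module.finrank ℝ V : ℚ) =
      (1 / N) * ∑ d ∈ N.divisors, (Nat.totient d : ℚ) * 4 ^ (N / d) - 1 := by
  have : NeZero N := ⟨by lia⟩
  have hcycle := isCycleOn_univ_finRotate N
  have := isCancelSMul_zpowers_of_isCycleOn_univ hcycle
  simpa only [card_zpowers_of_isCycleOn_univ hcycle, Nat.card_fin, Fintype.card_fin] using
    finrank_CNsu_general (Subgroup.zpowers (finRotate N)) V hV
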